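/- With the data below, set ξ_crit := N(η₂)/D(η₂). Then for every real ξ with ξ_crit < ξ < −(η₁ − η₁⁻¹)/ln η₁, there exists exactly one α ∈ (η₁, η₂) such that N(α) = ξ · D(α). -/

import Mathlib

/-- Complete elliptic integral of the first kind:
`K(k) = ∫₀¹ ds/√((1−s²)(1−k²s²))`. -/
noncomputable def ellK (k : ℝ) : ℝ :=
  ∫ s in (0 : ℝ)..1, 1 / Real.sqrt ((1 - s ^ 2) * (1 - k ^ 2 * s ^ 2))

/-- Complete elliptic integral of the third kind:
`Π(m,k) = ∫₀¹ ds/((1−ms²)√((1−s²)(1−k²s²)))`. -/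
noncomputable def ellPi (m k : ℝ) : ℝ :=
  ∫ s in (0 : ℝ)..1, 1 / ((1 - m * s ^ 2) * Real.sqrt ((1 - s ^ 2) * (1 - k ^ 2 * s ^ 2)))

/-- `l(x) = (x−1)/(x+1)`. -/
noncomputable def lpar (x : ℝ) : ℝ := (x - 1) / (x + 1)

/-- `k(α) = l₁/l(α)` (with `l₁ = l(η₁)`). -/
noncomputable def kfun (η₁ α : ℝ) : ℝ := lpar η₁ / lpar α

/-- `ρ_α(s) = √((η₁−s)(s−η₁⁻¹)(α−s)(s−α⁻¹))`. -/
noncomputable def rho (η₁ α s : ℝ) : ℝ :=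
  Real.sqrt ((η₁ - s) * (s - η₁⁻¹) * (α - s) * (s - α⁻¹))

/-- `Q(α) = (∫_{η₁⁻¹}^{η₁} (s²+s⁻²)/ρ_α(s) ds)/(∫_{η₁⁻¹}^{η₁} ds/ρ_α(s))`. -/
noncomputable def Qfun (η₁ α : ℝ) : ℝ :=
  (∫ s in η₁⁻¹..η₁, (s ^ 2 + (s⁻¹) ^ 2) / rho η₁ α s) /
    (∫ s in η₁⁻¹..η₁, 1 / rho η₁ α s)

/-- `D(α) = α + α⁻¹ + 2 − 4Π(l₁², k(α))/K(k(α))`. -/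
noncomputable def Dfun (η₁ α : ℝ) : ℝ :=
  α + α⁻¹ + 2 - 4 * ellPi (lpar η₁ ^ 2) (kfun η₁ α) / ellK (kfun η₁ α)

/-- `N(α) = −α² − α⁻² + ((α + α⁻¹ + η₁ + η₁⁻¹)/2)·D(α) + Q(α)`. -/
noncomputable def Nfun (η₁ α : ℝ) : ℝ :=
  -α ^ 2 - (α⁻¹) ^ 2 + (α + α⁻¹ + η₁ + η₁⁻¹) / 2 * Dfun η₁ α + Qfun η₁ α

/-!
Put `u(s) = s + s⁻¹`, `a = u(η₁)` and `b = u(α)`. Then `ρ_α(s) = s √((a - u)(b - u))`, and the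
substitution `σ = l(s) / l₁` turns the Legendre forms of `K` and `Π` into integrals against
`ds / ρ_α`. With the `α`-independent measure `dμ = ds / (s √(a - u))` on `(η₁⁻¹, η₁)` this yields
`N(α) / D(α) = (a - b) / 2 - M(b)`, where `M(b) = ∫ u √(b - u) dμ / ∫ √(b - u) dμ` is the mean of
`u` for the weight `√(b - u)`. Raising `b` shifts this weight towards larger values of `u`, so `M`
is nondecreasing and `N / D` is strictly decreasing in `α`. At `b = a` the square roots cancel and
the value is `-(η₁ - η₁⁻¹) / ln η₁`, so the intermediate value theorem gives the root.
-/

open MeasureTheory Set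

/-- The mean of `u` with respect to the measure `√(b − u) dμ`. For `b` above the range of `u` the
weight is positive; where `u > b` it vanishes, since `Real.sqrt` is `0` on negative numbers. -/
noncomputable def sqrtMean {X : Type*} [MeasurableSpace X] (μ : Measure X) (u : X → ℝ) (b : ℝ) :
    ℝ :=
  (∫ x, u x * √(b - u x) ∂μ) / ∫ x, √(b - u x) ∂μ

section SqrtMean

variable {X : Type*} [MeasurableSpace X] {μ : Measure X} {f u : X → ℝ} {b b' c m v : ℝ}

lemma integral_pos_of_ae_pos [NeZero μ] (hf : Integrable f μ) (hpos : ∀ᵐ x ∂μ, 0 < f x) :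
    0 < ∫ x, f x ∂μ := by
  have hnonneg : 0 ≤ᵐ[μ] f := hpos.mono fun _ hx ↦ hx.le
  refine (integral_nonneg_of_ae hnonneg).lt_of_ne' fun hzero ↦ ?_
  rw [integral_eq_zero_iff_of_nonneg_ae hnonneg hf] at hzero
  obtain ⟨x, hx, hx'⟩ := (hpos.and hzero).exists
  exact hx.ne' hx'

lemma norm_sqrt_sub_le (hcv : c ≤ v) (hbb' : b ≤ b') : ‖√(b - v)‖ ≤ √(b' - c) := by
  rw [Real.norm_of_nonneg (Real.sqrt_nonneg _)]
  gcongr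

lemma integrable_mul_sqrt_sub (hf : Integrable f μ) (hu : AEMeasurable u μ)
    (hc : ∀ᵐ x ∂μ, c ≤ u x) (b : ℝ) : Integrable (fun x ↦ f x * √(b - u x)) μ :=
  hf.mul_bdd (hu.const_sub b).sqrt.aestronglyMeasurable <|
    hc.mono fun _ hx ↦ norm_sqrt_sub_le hx le_rfl

lemma integrable_sqrt_sub [IsFiniteMeasure μ] (hu : AEMeasurable u μ) (hc : ∀ᵐ x ∂μ, c ≤ u x)
    (b : ℝ) : Integrable (fun x ↦ √(b - u x)) μ := by
  simpa only [one_mul] using integrable_mul_sqrt_sub (integrable_const 1) hu hc b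

lemma continuous_integral_mul_sqrt_sub (hf : Integrable f μ) (hu : AEMeasurable u μ)
    (hc : ∀ᵐ x ∂μ, c ≤ u x) : Continuous fun b ↦ ∫ x, f x * √(b - u x) ∂μ := by
  refine continuous_iff_continuousAt.2 fun b₀ ↦
    continuousAt_of_dominated (bound := fun x ↦ ‖f x‖ * √(b₀ + 1 - c)) ?_ ?_
      (hf.norm.mul_const _) (.of_forall fun x ↦ by fun_prop)
  · exact .of_forall fun b ↦ (integrable_mul_sqrt_sub hf hu hc b).aestronglyMeasurable
  · filter_upwards [Iic_mem_nhds (lt_add_one b₀)] with b hb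
    filter_upwards [hc] with x hx
    rw [norm_mul]
    gcongr
    exact norm_sqrt_sub_le hx hb

lemma integral_sqrt_sub_pos [IsFiniteMeasure μ] [NeZero μ] (hu : AEMeasurable u μ)
    (hc : ∀ᵐ x ∂μ, c ≤ u x) (hb : ∀ᵐ x ∂μ, u x < b) : 0 < ∫ x, √(b - u x) ∂μ :=
  integral_pos_of_ae_pos (integrable_sqrt_sub hu hc b) <|
    hb.mono fun _ hx ↦ Real.sqrt_pos.2 (sub_pos.2 hx)

lemma continuousOn_sqrtMean [IsFiniteMeasure μ] [NeZero μ] (hu : Integrable u μ)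
    (hc : ∀ᵐ x ∂μ, c ≤ u x) : ContinuousOn (sqrtMean μ u) {b | ∀ᵐ x ∂μ, u x < b} := by
  have hden : Continuous fun b ↦ ∫ x, √(b - u x) ∂μ := by
    simpa only [one_mul] using
      continuous_integral_mul_sqrt_sub (integrable_const 1) hu.aemeasurable hc
  exact (continuous_integral_mul_sqrt_sub hu hu.aemeasurable hc).continuousOn.div hden.continuousOn
    fun b hb ↦ (integral_sqrt_sub_pos hu.aemeasurable hc hb).ne'

lemma integral_sub_const_mul_sqrt_sub [IsFiniteMeasure μ] (hu : Integrable u μ)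
    (hc : ∀ᵐ x ∂μ, c ≤ u x) (b m : ℝ) :
    ∫ x, (u x - m) * √(b - u x) ∂μ =
      ∫ x, u x * √(b - u x) ∂μ - m * ∫ x, √(b - u x) ∂μ := by
  simp only [sub_mul]
  rw [integral_sub (integrable_mul_sqrt_sub hu hu.aemeasurable hc b)
    ((integrable_sqrt_sub hu.aemeasurable hc b).const_mul m), integral_const_mul]

lemma sqrtMean_lt [IsFiniteMeasure μ] [NeZero μ] (hu : Integrable u μ)
    (hc : ∀ᵐ x ∂μ, c ≤ u x) (hb : ∀ᵐ x ∂μ, u x < b) : sqrtMean μ u b < b := by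
  rw [sqrtMean, div_lt_iff₀ (integral_sqrt_sub_pos hu.aemeasurable hc hb), ← sub_neg,
    ← integral_sub_const_mul_sqrt_sub hu hc, ← neg_pos, ← integral_neg]
  refine integral_pos_of_ae_pos
    (integrable_mul_sqrt_sub (hu.sub (integrable_const b)) hu.aemeasurable hc b).neg ?_
  filter_upwards [hb] with x hx
  rw [← neg_mul, neg_sub]
  exact mul_pos (sub_pos.2 hx) (Real.sqrt_pos.2 (sub_pos.2 hx))

/- For `b ≤ b'` the quotient `√(b' - v) / √(b - v)` increases with `v`; this compares its values at
`v` and `m`, with denominators cleared. -/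
lemma sqrt_sub_mul_le_sqrt_sub_mul (hbb' : b ≤ b') (hm : m ≤ b) :
    √(b' - m) * ((v - m) * √(b - v)) ≤ √(b - m) * ((v - m) * √(b' - v)) := by
  suffices h : (v - m) * √((b' - m) * (b - v)) ≤ (v - m) * √((b - m) * (b' - v)) by
    rw [Real.sqrt_mul (by linarith), Real.sqrt_mul (by linarith)] at h
    linarith
  rcases le_total m v with hmv | hvm
  · refine mul_le_mul_of_nonneg_left (Real.sqrt_le_sqrt ?_) (sub_nonneg.2 hmv)
    nlinarith
  · refine mul_le_mul_of_nonpos_left (Real.sqrt_le_sqrt ?_) (sub_nonpos.2 hvm)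
    nlinarith

lemma sqrtMean_le_sqrtMean [IsFiniteMeasure μ] [NeZero μ] (hu : Integrable u μ)
    (hc : ∀ᵐ x ∂μ, c ≤ u x) (hb : ∀ᵐ x ∂μ, u x < b) (hbb' : b ≤ b') :
    sqrtMean μ u b ≤ sqrtMean μ u b' := by
  have hb' : ∀ᵐ x ∂μ, u x < b' := hb.mono fun _ hx ↦ hx.trans_le hbb'
  set m := sqrtMean μ u b with hm_def
  have hmb : m < b := sqrtMean_lt hu hc hb
  have hint (t : ℝ) : Integrable (fun x ↦ (u x - m) * √(t - u x)) μ :=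
    integrable_mul_sqrt_sub (hu.sub (integrable_const m)) hu.aemeasurable hc t
  have hzero : ∫ x, (u x - m) * √(b - u x) ∂μ = 0 := by
    rw [integral_sub_const_mul_sqrt_sub hu hc, hm_def, sqrtMean,
      div_mul_cancel₀ _ (integral_sqrt_sub_pos hu.aemeasurable hc hb).ne', sub_self]
  have hnonneg : 0 ≤ √(b - m) * ∫ x, (u x - m) * √(b' - u x) ∂μ :=
    calc
      0 = ∫ x, √(b' - m) * ((u x - m) * √(b - u x)) ∂μ := by
        rw [integral_const_mul, hzero, mul_zero]
      _ ≤ ∫ x, √(b - m) * ((u x - m) * √(b' - u x)) ∂μ :=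
        integral_mono_ae ((hint b).const_mul _) ((hint b').const_mul _) <|
          ae_of_all _ fun _ ↦ sqrt_sub_mul_le_sqrt_sub_mul hbb' hmb.le
      _ = √(b - m) * ∫ x, (u x - m) * √(b' - u x) ∂μ := integral_const_mul _ _
  rw [sqrtMean, le_div_iff₀ (integral_sqrt_sub_pos hu.aemeasurable hc hb'), ← sub_nonneg,
    ← integral_sub_const_mul_sqrt_sub hu hc]
  exact nonneg_of_mul_nonneg_right hnonneg (Real.sqrt_pos.2 (sub_pos.2 hmb))

end SqrtMean

section Integrals

variable {f : ℝ → ℝ} {p q η : ℝ}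

lemma intervalIntegrable_one_div_sqrt_sub_mul_sub (hpq : p < q) :
    IntervalIntegrable (fun s ↦ 1 / √((q - s) * (s - p))) volume p q := by
  have hlen : 0 < q - p := sub_pos.2 hpq
  refine intervalIntegral.intervalIntegrable_deriv_of_nonneg
    (g := fun s ↦ Real.arcsin ((2 * s - (p + q)) / (q - p)))
    (Real.continuous_arcsin.comp (by fun_prop)).continuousOn ?_ fun s _ ↦ by positivity
  rw [min_eq_left hpq.le, max_eq_right hpq.le]
  rintro s ⟨hps, hsq⟩
  have hlow : (2 * s - (p + q)) / (q - p) ≠ -1 := by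
    rw [Ne, div_eq_iff hlen.ne']
    linarith
  have hupp : (2 * s - (p + q)) / (q - p) ≠ 1 := by
    rw [Ne, div_eq_iff hlen.ne']
    linarith
  have hinner : HasDerivAt (fun s ↦ (2 * s - (p + q)) / (q - p)) (2 / (q - p)) s := by
    simpa using (((hasDerivAt_id s).const_mul 2).sub_const (p + q)).div_const (q - p)
  have hsqrt : √(1 - ((2 * s - (p + q)) / (q - p)) ^ 2) = 2 / (q - p) * √((q - s) * (s - p)) := by
    rw [← Real.sqrt_sq (by positivity : 0 ≤ 2 / (q - p)), ← Real.sqrt_mul (sq_nonneg _)]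
    congr 1
    field_simp
    ring
  refine ((Real.hasDerivAt_arcsin hlow hupp).comp s hinner).congr_deriv ?_
  rw [hsqrt]
  field_simp

lemma integral_inv_self_eq_two_mul (hη : 1 ≤ η) (hf : IntervalIntegrable f volume η⁻¹ η)
    (hsymm : ∀ s ∈ Ioo 1 η, f s⁻¹ = s ^ 2 * f s) :
    ∫ s in η⁻¹..η, f s = 2 * ∫ s in 1..η, f s := by
  have hinv : η⁻¹ ≤ 1 := inv_le_one_of_one_le₀ hη
  have hmem : (1 : ℝ) ∈ uIcc η⁻¹ η := by
    rw [uIcc_of_le (hinv.trans hη)]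
    exact ⟨hinv, hη⟩
  have hne : ∀ s ∈ uIcc 1 η, s ≠ 0 := fun s hs ↦ by
    rw [uIcc_of_le hη] at hs
    linarith [hs.1]
  have hreflect : ∫ s in η⁻¹..1, f s = ∫ s in 1..η, f s := by
    have hsubst := intervalIntegral.integral_comp_mul_deriv_of_deriv_nonpos (g := f)
      (f' := fun s ↦ -(s ^ 2)⁻¹) (continuousOn_inv₀.mono hne)
      (fun s hs ↦ hasDerivAt_inv (hne s (Ioo_subset_Icc_self hs)))
      (fun s _ ↦ by simp only [Left.neg_nonpos_iff]; positivity)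
    rw [inv_one] at hsubst
    rw [intervalIntegral.integral_symm, ← hsubst, ← intervalIntegral.integral_neg]
    refine intervalIntegral.integral_congr_Ioo_of_le hη fun s hs ↦ ?_
    have hs0 : s ≠ 0 := (zero_lt_one.trans hs.1).ne'
    simp only [Function.comp_apply, hsymm s hs]
    field_simp
  rw [← intervalIntegral.integral_add_adjacent_intervals
    (hf.mono_set (uIcc_subset_uIcc left_mem_uIcc hmem))
    (hf.mono_set (uIcc_subset_uIcc hmem right_mem_uIcc)), hreflect, two_mul]

end Integrals

/-- The Joukowsky map. The integrands `s² + s⁻²`, `ρ_α` and the kernel of `Π` are, up to powers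
of `s`, functions of its value. -/
noncomputable def joukowsky (s : ℝ) : ℝ := s + s⁻¹

section Joukowsky

variable {η α s : ℝ}

lemma sub_mul_sub_inv (hη : η ≠ 0) (hs : s ≠ 0) :
    (η - s) * (s - η⁻¹) = s * (joukowsky η - joukowsky s) := by
  unfold joukowsky
  field_simp
  ring

lemma inv_lt_self_of_one_lt (hη : 1 < η) : η⁻¹ < η := (inv_lt_one_of_one_lt₀ hη).trans hη

lemma pos_of_mem_Ioo_inv (hη : 1 < η) (hs : s ∈ Ioo η⁻¹ η) : 0 < s :=
  (inv_pos.2 (zero_lt_one.trans hη)).trans hs.1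

lemma joukowsky_pos (hs : 0 < s) : 0 < joukowsky s := by
  unfold joukowsky
  positivity

lemma joukowsky_lt_of_mem_Ioo (hη : 1 < η) (hs : s ∈ Ioo η⁻¹ η) :
    joukowsky s < joukowsky η := by
  have hs0 := pos_of_mem_Ioo_inv hη hs
  have hprod : 0 < s * (joukowsky η - joukowsky s) := by
    rw [← sub_mul_sub_inv (zero_lt_one.trans hη).ne' hs0.ne']
    exact mul_pos (sub_pos.2 hs.2) (sub_pos.2 hs.1)
  exact sub_pos.1 (pos_of_mul_pos_right hprod hs0.le)

lemma mem_Ioo_inv_of_one_le (hs : 1 ≤ s) (hsη : s < η) : s ∈ Ioo η⁻¹ η :=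
  ⟨(inv_lt_one_of_one_lt₀ (hs.trans_lt hsη)).trans_le hs, hsη⟩

lemma strictMonoOn_joukowsky : StrictMonoOn joukowsky (Ici 1) := fun _ hs _ _ hsη ↦
  joukowsky_lt_of_mem_Ioo (lt_of_le_of_lt hs hsη) (mem_Ioo_inv_of_one_le hs hsη)

lemma continuousOn_joukowsky : ContinuousOn joukowsky {0}ᶜ :=
  continuousOn_id.add continuousOn_inv₀

lemma joukowsky_inv (s : ℝ) : joukowsky s⁻¹ = joukowsky s := by
  rw [joukowsky, inv_inv, add_comm, joukowsky]

lemma rho_eq_sqrt (hη : η ≠ 0) (hα : α ≠ 0) (hs : 0 < s) :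
    rho η α s = s * √((joukowsky η - joukowsky s) * (joukowsky α - joukowsky s)) := by
  rw [rho, sub_mul_sub_inv hη hs.ne', mul_assoc _ (α - s), sub_mul_sub_inv hα hs.ne',
    mul_mul_mul_comm, ← sq, Real.sqrt_mul (sq_nonneg s), Real.sqrt_sq hs.le]

lemma rho_pos (hη : 1 < η) (hα : η < α) (hs : s ∈ Ioo η⁻¹ η) : 0 < rho η α s := by
  have hs0 := pos_of_mem_Ioo_inv hη hs
  have hsη := joukowsky_lt_of_mem_Ioo hη hs
  have hηα := strictMonoOn_joukowsky hη.le (hη.trans hα).le hα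
  rw [rho_eq_sqrt (by linarith) (by linarith) hs0]
  exact mul_pos hs0 (Real.sqrt_pos.2 (mul_pos (by linarith) (by linarith)))

lemma rho_inv (hη : η ≠ 0) (hα : α ≠ 0) (hs : 0 < s) : rho η α s⁻¹ = rho η α s / s ^ 2 := by
  rw [rho_eq_sqrt hη hα (inv_pos.2 hs), rho_eq_sqrt hη hα hs, joukowsky_inv]
  field_simp

end Joukowsky

/-- The part `1 / (s √(u(η) − u(s)))`, with `u` the Joukowsky map, of `1 / ρ_α(s)` which does not
depend on `α`. -/
noncomputable def bandWeight (η s : ℝ) : ℝ := 1 / (s * √(joukowsky η - joukowsky s))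

/-- The measure on the band `(η⁻¹, η)` with density `bandWeight η`. -/
noncomputable def bandMeasure (η : ℝ) : Measure ℝ :=
  (volume.restrict (Ioo η⁻¹ η)).withDensity fun s ↦ ENNReal.ofReal (bandWeight η s)

section Band

variable {η α s : ℝ}

lemma bandWeight_pos (hη : 1 < η) (hs : s ∈ Ioo η⁻¹ η) : 0 < bandWeight η s :=
  one_div_pos.2 <| mul_pos (pos_of_mem_Ioo_inv hη hs) <|
    Real.sqrt_pos.2 <| sub_pos.2 <| joukowsky_lt_of_mem_Ioo hη hs

lemma ne_zero_of_mem_uIcc_inv (hη : 1 < η) (hs : s ∈ uIcc η⁻¹ η) : s ≠ 0 := by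
  rw [uIcc_of_le (inv_lt_self_of_one_lt hη).le] at hs
  exact ((inv_pos.2 (zero_lt_one.trans hη)).trans_le hs.1).ne'

lemma continuousOn_joukowsky_uIcc (hη : 1 < η) : ContinuousOn joukowsky (uIcc η⁻¹ η) :=
  continuousOn_joukowsky.mono fun _ ↦ ne_zero_of_mem_uIcc_inv hη

lemma intervalIntegrable_bandWeight (hη : 1 < η) :
    IntervalIntegrable (bandWeight η) volume η⁻¹ η := by
  have hband := inv_lt_self_of_one_lt hη
  have hcont : ContinuousOn (fun s ↦ (√s)⁻¹) (uIcc η⁻¹ η) :=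
    Real.continuous_sqrt.continuousOn.inv₀ fun s hs ↦ by
      rw [uIcc_of_le hband.le] at hs
      exact (Real.sqrt_pos.2 ((inv_pos.2 (zero_lt_one.trans hη)).trans_le hs.1)).ne'
  refine ((intervalIntegrable_one_div_sqrt_sub_mul_sub hband).continuousOn_mul hcont).congr_uIoo
    fun s hs ↦ ?_
  rw [uIoo_of_le hband.le] at hs
  have hs0 := pos_of_mem_Ioo_inv hη hs
  simp only [bandWeight]
  rw [sub_mul_sub_inv (zero_lt_one.trans hη).ne' hs0.ne', Real.sqrt_mul hs0.le, ← one_div,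
    one_div_mul_one_div, ← mul_assoc, Real.mul_self_sqrt hs0.le]

lemma integral_bandMeasure (hη : 1 < η) (f : ℝ → ℝ) :
    ∫ s, f s ∂bandMeasure η = ∫ s in η⁻¹..η, f s * bandWeight η s := by
  have hmeas : AEMeasurable (bandWeight η) (volume.restrict (Ioo η⁻¹ η)) := by
    unfold bandWeight joukowsky
    fun_prop
  rw [bandMeasure, integral_withDensity_eq_integral_toReal_smul₀ hmeas.ennreal_ofReal (by simp),
    intervalIntegral.integral_of_le (inv_lt_self_of_one_lt hη).le, integral_Ioc_eq_integral_Ioo]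
  refine setIntegral_congr_fun measurableSet_Ioo fun s hs ↦ ?_
  simp only [ENNReal.toReal_ofReal (bandWeight_pos hη hs).le, smul_eq_mul, mul_comm]

lemma isFiniteMeasure_bandMeasure (hη : 1 < η) : IsFiniteMeasure (bandMeasure η) := by
  refine isFiniteMeasure_withDensity_ofReal (Integrable.hasFiniteIntegral ?_)
  exact (intervalIntegrable_iff_integrableOn_Ioo_of_le (inv_lt_self_of_one_lt hη).le).1
    (intervalIntegrable_bandWeight hη)

lemma neZero_bandMeasure (hη : 1 < η) : NeZero (bandMeasure η) := by
  have hmass : 0 < ∫ _, (1 : ℝ) ∂bandMeasure η := by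
    simp only [integral_bandMeasure hη, one_mul]
    exact intervalIntegral.intervalIntegral_pos_of_pos_on (intervalIntegrable_bandWeight hη)
      (fun s hs ↦ bandWeight_pos hη hs) (inv_lt_self_of_one_lt hη)
  refine ⟨fun hzero ↦ hmass.ne' ?_⟩
  rw [hzero, integral_zero_measure]

lemma ae_bandMeasure_mem_Ioo (η : ℝ) : ∀ᵐ s ∂bandMeasure η, s ∈ Ioo η⁻¹ η :=
  (withDensity_absolutelyContinuous _ _).ae_le (ae_restrict_mem measurableSet_Ioo)

lemma ae_joukowsky_nonneg (hη : 1 < η) : ∀ᵐ s ∂bandMeasure η, 0 ≤ joukowsky s :=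
  (ae_bandMeasure_mem_Ioo η).mono fun _ hs ↦ (joukowsky_pos (pos_of_mem_Ioo_inv hη hs)).le

lemma ae_joukowsky_lt (hη : 1 < η) (hα : η ≤ α) :
    ∀ᵐ s ∂bandMeasure η, joukowsky s < joukowsky α :=
  (ae_bandMeasure_mem_Ioo η).mono fun _ hs ↦ (joukowsky_lt_of_mem_Ioo hη hs).trans_le <|
    strictMonoOn_joukowsky.monotoneOn hη.le (hη.le.trans hα) hα

lemma integrable_joukowsky (hη : 1 < η) : Integrable joukowsky (bandMeasure η) := by
  have := isFiniteMeasure_bandMeasure hη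
  have hmeas : Measurable joukowsky := by
    unfold joukowsky
    fun_prop
  refine .of_bound hmeas.aestronglyMeasurable (joukowsky η) ?_
  filter_upwards [ae_joukowsky_nonneg hη, ae_joukowsky_lt hη le_rfl] with s hs0 hsη
  rw [Real.norm_of_nonneg hs0]
  exact hsη.le

lemma integral_sqrt_sub_joukowsky_pos (hη : 1 < η) (hα : η ≤ α) :
    0 < ∫ s, √(joukowsky α - joukowsky s) ∂bandMeasure η := by
  have := isFiniteMeasure_bandMeasure hη
  have := neZero_bandMeasure hη
  exact integral_sqrt_sub_pos (integrable_joukowsky hη).aemeasurable (ae_joukowsky_nonneg hη)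
    (ae_joukowsky_lt hη hα)

end Band

/-- The speed `ξ` to which the branch point `α` belongs: for `α > η` it is `N(α) / D(α)`, and at
`α = η`, where the modulus `k(α)` reaches `1` and `N`, `D` degenerate, the limit value. -/
noncomputable def branchSpeed (η α : ℝ) : ℝ :=
  (joukowsky η - joukowsky α) / 2 - sqrtMean (bandMeasure η) joukowsky (joukowsky α)

section BranchSpeed

variable {η α : ℝ}

lemma strictAntiOn_branchSpeed (hη : 1 < η) : StrictAntiOn (branchSpeed η) (Ici η) := by
  have := isFiniteMeasure_bandMeasure hη
  have := neZero_bandMeasure hη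
  intro α hα β hβ hαβ
  have hjou := strictMonoOn_joukowsky (hη.le.trans hα) (hη.le.trans hβ) hαβ
  have hmean := sqrtMean_le_sqrtMean (integrable_joukowsky hη) (ae_joukowsky_nonneg hη)
    (ae_joukowsky_lt hη hα) hjou.le
  unfold branchSpeed
  linarith

lemma continuousOn_branchSpeed (hη : 1 < η) : ContinuousOn (branchSpeed η) (Ici η) := by
  have := isFiniteMeasure_bandMeasure hη
  have := neZero_bandMeasure hη
  have hjou : ContinuousOn joukowsky (Ici η) :=
    continuousOn_joukowsky.mono fun α (hα : η ≤ α) ↦ by simp; linarith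
  exact ((continuousOn_const.sub hjou).div_const 2).sub <|
    (continuousOn_sqrtMean (integrable_joukowsky hη) (ae_joukowsky_nonneg hη)).comp hjou
      fun α hα ↦ ae_joukowsky_lt hη hα

/- At `b = u(η)` the factor `√(b - u)` cancels the singularity of the weight and leaves `ds / s`. -/
lemma integral_bandMeasure_mul_sqrt_self (hη : 1 < η) (f : ℝ → ℝ) :
    ∫ s, f s * √(joukowsky η - joukowsky s) ∂bandMeasure η = ∫ s in η⁻¹..η, f s * s⁻¹ := by
  rw [integral_bandMeasure hη]
  refine intervalIntegral.integral_congr_Ioo_of_le (inv_lt_self_of_one_lt hη).le fun s hs ↦ ?_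
  have hsqrt := Real.sqrt_pos.2 (sub_pos.2 (joukowsky_lt_of_mem_Ioo hη hs))
  simp only [bandWeight]
  field_simp

lemma integral_joukowsky_mul_inv (hη : 1 < η) :
    ∫ s in η⁻¹..η, joukowsky s * s⁻¹ = 2 * (η - η⁻¹) := by
  have hne : ∀ s ∈ uIcc η⁻¹ η, s ≠ 0 := fun _ ↦ ne_zero_of_mem_uIcc_inv hη
  have hderiv : ∀ s ∈ uIcc η⁻¹ η, HasDerivAt (fun s ↦ s - s⁻¹) (joukowsky s * s⁻¹) s := by
    intro s hs
    have hs0 := hne s hs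
    refine ((hasDerivAt_id s).sub (hasDerivAt_inv hs0)).congr_deriv ?_
    unfold joukowsky
    field_simp
    ring
  rw [intervalIntegral.integral_eq_sub_of_hasDerivAt hderiv]
  · rw [inv_inv]
    ring
  · exact ((continuousOn_joukowsky_uIcc hη).mul (continuousOn_inv₀.mono hne)).intervalIntegrable

lemma branchSpeed_self (hη : 1 < η) : branchSpeed η η = -(η - η⁻¹) / Real.log η := by
  have hη0 : 0 < η := zero_lt_one.trans hη
  have hnum := integral_bandMeasure_mul_sqrt_self hη joukowsky
  have hden := integral_bandMeasure_mul_sqrt_self hη fun _ ↦ 1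
  simp only [one_mul] at hden
  rw [branchSpeed, sqrtMean, hnum, hden, integral_joukowsky_mul_inv hη,
    integral_inv_of_pos (inv_pos.2 hη0) hη0, div_inv_eq_mul, ← sq, Real.log_pow, Nat.cast_ofNat,
    mul_div_mul_left _ _ two_ne_zero, sub_self, zero_div, zero_sub, neg_div]

end BranchSpeed

section Elliptic

variable {η α s : ℝ} {F : ℝ → ℝ}

lemma lpar_pos (hη : 1 < η) : 0 < lpar η :=
  div_pos (by linarith) (by linarith)

lemma hasDerivAt_lpar (hs : 0 < s) : HasDerivAt lpar (2 / (s + 1) ^ 2) s := by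
  refine (((hasDerivAt_id s).sub_const 1).div ((hasDerivAt_id s).add_const 1) ?_).congr_deriv ?_
  · simp only [id]
    positivity
  · simp only [id]
    ring

lemma one_sub_lpar_sq (hs : 0 < s) : 1 - lpar s ^ 2 = 4 / (joukowsky s + 2) := by
  unfold lpar joukowsky
  field_simp
  ring

lemma one_sub_lpar_div_sq (hη : 1 < η) (hs : 0 < s) :
    1 - (lpar s / lpar η) ^ 2 =
      4 * (joukowsky η - joukowsky s) /
        ((joukowsky s + 2) * (joukowsky η + 2) * lpar η ^ 2) := by
  have hη0 : 0 < η := zero_lt_one.trans hη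
  have hlη := lpar_pos hη
  have hjs := joukowsky_pos hs
  have hjη := joukowsky_pos hη0
  have hdiff : lpar η ^ 2 - lpar s ^ 2 = 4 / (joukowsky s + 2) - 4 / (joukowsky η + 2) := by
    rw [← one_sub_lpar_sq hs, ← one_sub_lpar_sq hη0]
    ring
  rw [div_pow, one_sub_div (by positivity), hdiff]
  field_simp
  ring

/-- The Jacobian constant of the substitution `σ = lpar s / lpar η`, which carries the Legendre
form of the elliptic integrals with modulus `k(α)` to the form `ds / ρ_α(s)`. -/
noncomputable def legendreScale (η α : ℝ) : ℝ :=
  lpar α * √((joukowsky η + 2) * (joukowsky α + 2)) / 2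

lemma legendreScale_pos (hη : 1 < η) (hα : 1 < α) : 0 < legendreScale η α := by
  have hlα := lpar_pos hα
  have hjη := joukowsky_pos (zero_lt_one.trans hη)
  have hjα := joukowsky_pos (zero_lt_one.trans hα)
  unfold legendreScale
  positivity

lemma legendreRoot_lpar_div (hη : 1 < η) (hα : 1 < α) (hs : 0 < s) :
    √((1 - (lpar s / lpar η) ^ 2) * (1 - kfun η α ^ 2 * (lpar s / lpar η) ^ 2)) =
      2 / ((s + 1) ^ 2 * lpar η * legendreScale η α) * rho η α s := by
  have hη0 : 0 < η := zero_lt_one.trans hη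
  have hα0 : 0 < α := zero_lt_one.trans hα
  have hlη := lpar_pos hη
  have hlα := lpar_pos hα
  have hjs := joukowsky_pos hs
  have hjη := joukowsky_pos hη0
  have hjα := joukowsky_pos hα0
  have hmodulus : kfun η α ^ 2 * (lpar s / lpar η) ^ 2 = (lpar s / lpar α) ^ 2 := by
    unfold kfun
    field_simp
  have hsquare : s * (joukowsky s + 2) = (s + 1) ^ 2 := by
    unfold joukowsky
    field_simp
    ring
  have hproduct : (1 - (lpar s / lpar η) ^ 2) * (1 - (lpar s / lpar α) ^ 2) =
      (4 / ((joukowsky s + 2) * lpar η * lpar α)) ^ 2 *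
        ((joukowsky η - joukowsky s) * (joukowsky α - joukowsky s) /
          ((joukowsky η + 2) * (joukowsky α + 2))) := by
    rw [one_sub_lpar_div_sq hη hs, one_sub_lpar_div_sq hα hs]
    field_simp
  rw [hmodulus, hproduct, Real.sqrt_mul (sq_nonneg _), Real.sqrt_sq (by positivity),
    Real.sqrt_div' _ (by positivity), rho_eq_sqrt hη0.ne' hα0.ne' hs, legendreScale, ← hsquare]
  field_simp
  norm_num

lemma integral_legendre_eq_integral_rho (hη : 1 < η) (hα : η < α) (F : ℝ → ℝ) :
    ∫ σ in 0..1, F σ / √((1 - σ ^ 2) * (1 - kfun η α ^ 2 * σ ^ 2)) =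
      legendreScale η α * ∫ s in 1..η, F (lpar s / lpar η) / rho η α s := by
  have hlη := lpar_pos hη
  have hderiv : ∀ s, 1 ≤ s → HasDerivAt (fun s ↦ lpar s / lpar η) (2 / (s + 1) ^ 2 / lpar η) s :=
    fun s hs ↦ (hasDerivAt_lpar (zero_lt_one.trans_le hs)).div_const _
  have hsubst := intervalIntegral.integral_comp_mul_deriv_of_deriv_nonneg (a := 1) (b := η)
    (f := fun s ↦ lpar s / lpar η) (f' := fun s ↦ 2 / (s + 1) ^ 2 / lpar η)
    (g := fun σ ↦ F σ / √((1 - σ ^ 2) * (1 - kfun η α ^ 2 * σ ^ 2)))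
    (fun s hs ↦ by
      rw [uIcc_of_le hη.le] at hs
      exact (hderiv s hs.1).continuousAt.continuousWithinAt)
    (fun s hs ↦ by
      rw [min_eq_left hη.le] at hs
      exact hderiv s hs.1.le)
    (fun s _ ↦ by positivity)
  have hleft : lpar 1 / lpar η = 0 := by simp [lpar]
  rw [hleft, div_self hlη.ne'] at hsubst
  rw [← hsubst, ← intervalIntegral.integral_const_mul]
  refine intervalIntegral.integral_congr_Ioo_of_le hη.le fun s hs ↦ ?_
  have hs0 : 0 < s := zero_lt_one.trans hs.1
  simp only [Function.comp_apply]
  rw [legendreRoot_lpar_div hη (hη.trans hα) hs0]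
  field_simp

lemma one_div_rho (hη : 1 < η) (hα : η < α) (hs : s ∈ Ioo η⁻¹ η) :
    1 / rho η α s = bandWeight η s / √(joukowsky α - joukowsky s) := by
  have hgap := sub_pos.2 (joukowsky_lt_of_mem_Ioo hη hs)
  rw [rho_eq_sqrt (by linarith) (by linarith) (pos_of_mem_Ioo_inv hη hs), Real.sqrt_mul hgap.le,
    bandWeight, div_div, mul_assoc]

lemma intervalIntegrable_div_rho (hη : 1 < η) (hα : η < α) (hF : ContinuousOn F (uIcc η⁻¹ η)) :
    IntervalIntegrable (fun s ↦ F s / rho η α s) volume η⁻¹ η := by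
  have hband := inv_lt_self_of_one_lt hη
  have hgap : ∀ s ∈ uIcc η⁻¹ η, 0 < joukowsky α - joukowsky s := fun s hs ↦ by
    rw [uIcc_of_le hband.le] at hs
    have hαη : α⁻¹ < η⁻¹ := inv_strictAnti₀ (zero_lt_one.trans hη) hα
    exact sub_pos.2 (joukowsky_lt_of_mem_Ioo (hη.trans hα) ⟨hαη.trans_le hs.1, hs.2.trans_lt hα⟩)
  have hcont : ContinuousOn (fun s ↦ F s / √(joukowsky α - joukowsky s)) (uIcc η⁻¹ η) :=
    hF.div (continuousOn_const.sub (continuousOn_joukowsky_uIcc hη)).sqrt fun s hs ↦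
      (Real.sqrt_pos.2 (hgap s hs)).ne'
  refine ((intervalIntegrable_bandWeight hη).continuousOn_mul hcont).congr_uIoo fun s hs ↦ ?_
  rw [uIoo_of_le hband.le] at hs
  rw [div_eq_mul_one_div (F s) (rho η α s), one_div_rho hη hα hs]
  ring

lemma integral_joukowsky_div_rho (hη : 1 < η) (hα : η < α)
    (hF : ContinuousOn (fun s ↦ F (joukowsky s)) (uIcc η⁻¹ η)) :
    ∫ s in η⁻¹..η, F (joukowsky s) / rho η α s =
      2 * ∫ s in 1..η, F (joukowsky s) / rho η α s := by
  refine integral_inv_self_eq_two_mul hη.le (intervalIntegrable_div_rho hη hα hF) fun s hs ↦ ?_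
  have hs0 : 0 < s := zero_lt_one.trans hs.1
  rw [joukowsky_inv, rho_inv (by linarith) (by linarith) hs0, div_div_eq_mul_div]
  ring

lemma integral_one_div_rho_pos (hη : 1 < η) (hα : η < α) :
    0 < ∫ s in η⁻¹..η, 1 / rho η α s :=
  intervalIntegral.intervalIntegral_pos_of_pos_on
    (intervalIntegrable_div_rho hη hα continuousOn_const)
    (fun _ hs ↦ one_div_pos.2 (rho_pos hη hα hs)) (inv_lt_self_of_one_lt hη)

lemma four_mul_ellPi_div_ellK (hη : 1 < η) (hα : η < α) :
    4 * ellPi (lpar η ^ 2) (kfun η α) / ellK (kfun η α) =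
      (∫ s in η⁻¹..η, (joukowsky s + 2) / rho η α s) / ∫ s in η⁻¹..η, 1 / rho η α s := by
  have hscale := legendreScale_pos hη (hη.trans hα)
  have hlη := lpar_pos hη
  have hPi : ellPi (lpar η ^ 2) (kfun η α) =
      legendreScale η α * ∫ s in 1..η, 4⁻¹ * ((joukowsky s + 2) / rho η α s) := by
    simp only [ellPi, ← div_div]
    rw [integral_legendre_eq_integral_rho hη hα fun σ ↦ 1 / (1 - lpar η ^ 2 * σ ^ 2)]
    refine congrArg _ (intervalIntegral.integral_congr_Ioo_of_le hη.le fun s hs ↦ ?_)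
    have hs0 : 0 < s := zero_lt_one.trans hs.1
    rw [← mul_pow, mul_div_cancel₀ _ hlη.ne', one_sub_lpar_sq hs0, one_div_div]
    ring
  have hK : ellK (kfun η α) = legendreScale η α * ∫ s in 1..η, 1 / rho η α s :=
    integral_legendre_eq_integral_rho hη hα fun _ ↦ 1
  rw [hPi, hK, intervalIntegral.integral_const_mul,
    integral_joukowsky_div_rho hη hα (F := fun u ↦ u + 2)
      ((continuousOn_joukowsky_uIcc hη).add continuousOn_const),
    integral_joukowsky_div_rho hη hα (F := fun _ ↦ 1) continuousOn_const,
    mul_div_mul_left _ _ two_ne_zero, mul_left_comm, mul_div_mul_left _ _ hscale.ne']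
  ring

lemma integral_mul_sub_div_rho (hη : 1 < η) (hα : η < α) (F : ℝ → ℝ) :
    ∫ s in η⁻¹..η, F s * (joukowsky α - joukowsky s) / rho η α s =
      ∫ s, F s * √(joukowsky α - joukowsky s) ∂bandMeasure η := by
  rw [integral_bandMeasure hη]
  refine intervalIntegral.integral_congr_Ioo_of_le (inv_lt_self_of_one_lt hη).le fun s hs ↦ ?_
  rw [div_eq_mul_one_div, one_div_rho hη hα hs, mul_assoc, mul_div_left_comm, Real.div_sqrt]
  ring

lemma integral_sub_div_rho (hη : 1 < η) (hα : η < α) :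
    ∫ s in η⁻¹..η, (joukowsky α - joukowsky s) / rho η α s =
      ∫ s, √(joukowsky α - joukowsky s) ∂bandMeasure η := by
  simpa only [one_mul] using integral_mul_sub_div_rho hη hα fun _ ↦ 1

lemma Dfun_eq (hη : 1 < η) (hα : η < α) :
    Dfun η α = (∫ s, √(joukowsky α - joukowsky s) ∂bandMeasure η) /
      ∫ s in η⁻¹..η, 1 / rho η α s := by
  have hmass := integral_one_div_rho_pos hη hα
  have hone := intervalIntegrable_div_rho hη hα (F := fun _ ↦ 1) continuousOn_const
  have hsum := intervalIntegrable_div_rho hη hα (F := fun s ↦ joukowsky s + 2)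
    ((continuousOn_joukowsky_uIcc hη).add continuousOn_const)
  rw [Dfun, four_mul_ellPi_div_ellK hη hα, ← integral_sub_div_rho hη hα, eq_div_iff hmass.ne',
    sub_mul, div_mul_cancel₀ _ hmass.ne', ← intervalIntegral.integral_const_mul,
    ← intervalIntegral.integral_sub (hone.const_mul _) hsum]
  congr 1 with s
  simp only [joukowsky]
  ring

lemma Dfun_pos (hη : 1 < η) (hα : η < α) : 0 < Dfun η α := by
  rw [Dfun_eq hη hα]
  exact div_pos (integral_sqrt_sub_joukowsky_pos hη hα.le) (integral_one_div_rho_pos hη hα)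

lemma sq_add_inv_sq (hs : s ≠ 0) : s ^ 2 + s⁻¹ ^ 2 = joukowsky s ^ 2 - 2 := by
  unfold joukowsky
  field_simp
  ring

/- With `u = joukowsky s` and `b = joukowsky α` the numerator of the integrand is
`u² - 2 = (b² - 2) - b (b - u) - u (b - u)`. -/
lemma integral_sq_add_inv_sq_div_rho (hη : 1 < η) (hα : η < α) :
    ∫ s in η⁻¹..η, (s ^ 2 + s⁻¹ ^ 2) / rho η α s =
      (α ^ 2 + α⁻¹ ^ 2) * (∫ s in η⁻¹..η, 1 / rho η α s) -
        joukowsky α * (∫ s, √(joukowsky α - joukowsky s) ∂bandMeasure η) -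
          ∫ s, joukowsky s * √(joukowsky α - joukowsky s) ∂bandMeasure η := by
  have hjou := continuousOn_joukowsky_uIcc hη
  have hgap : ContinuousOn (fun s ↦ joukowsky α - joukowsky s) (uIcc η⁻¹ η) :=
    continuousOn_const.sub hjou
  have hint_one := (intervalIntegrable_div_rho hη hα (F := fun _ ↦ 1) continuousOn_const).const_mul
    (α ^ 2 + α⁻¹ ^ 2)
  have hint_gap := (intervalIntegrable_div_rho hη hα hgap).const_mul (joukowsky α)
  have hint_mul := intervalIntegrable_div_rho hη hα
    (F := fun s ↦ joukowsky s * (joukowsky α - joukowsky s)) (hjou.mul hgap)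
  rw [← integral_mul_sub_div_rho hη hα, ← integral_sub_div_rho hη hα,
    ← intervalIntegral.integral_const_mul, ← intervalIntegral.integral_const_mul,
    ← intervalIntegral.integral_sub hint_one hint_gap,
    ← intervalIntegral.integral_sub (hint_one.sub hint_gap) hint_mul]
  refine intervalIntegral.integral_congr fun s hs ↦ ?_
  rw [sq_add_inv_sq (ne_zero_of_mem_uIcc_inv hη hs), sq_add_inv_sq (by linarith)]
  ring

lemma Qfun_eq (hη : 1 < η) (hα : η < α) :
    Qfun η α = α ^ 2 + α⁻¹ ^ 2 - joukowsky α * Dfun η α -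
      (∫ s, joukowsky s * √(joukowsky α - joukowsky s) ∂bandMeasure η) /
        ∫ s in η⁻¹..η, 1 / rho η α s := by
  rw [Qfun, integral_sq_add_inv_sq_div_rho hη hα, Dfun_eq hη hα, sub_div, sub_div,
    mul_div_cancel_right₀ _ (integral_one_div_rho_pos hη hα).ne', mul_div_assoc]

lemma Nfun_div_Dfun (hη : 1 < η) (hα : η < α) : Nfun η α / Dfun η α = branchSpeed η α := by
  have hD := Dfun_pos hη hα
  have hroot := integral_sqrt_sub_joukowsky_pos hη hα.le
  have hmean : sqrtMean (bandMeasure η) joukowsky (joukowsky α) * Dfun η α =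
      (∫ s, joukowsky s * √(joukowsky α - joukowsky s) ∂bandMeasure η) /
        ∫ s in η⁻¹..η, 1 / rho η α s := by
    rw [sqrtMean, Dfun_eq hη hα, ← mul_div_assoc, div_mul_cancel₀ _ hroot.ne']
  rw [div_eq_iff hD.ne', branchSpeed, sub_mul, hmean, Nfun, Qfun_eq hη hα]
  simp only [joukowsky]
  ring

end Elliptic

/- STATEMENT 19: Fix 1 < η₁ < η₂ and set ξ_crit := N(η₂)/D(η₂).  Then for every
real ξ with ξ_crit < ξ < −(η₁ − η₁⁻¹)/ln η₁, there exists exactly one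
α ∈ (η₁, η₂) such that N(α) = ξ · D(α). -/
theorem stmt19 (η₁ η₂ : ℝ) (h1 : 1 < η₁) (h2 : η₁ < η₂) (ξ : ℝ)
    (hlow : Nfun η₁ η₂ / Dfun η₁ η₂ < ξ)
    (hhigh : ξ < -(η₁ - η₁⁻¹) / Real.log η₁) :
    ∃! α, α ∈ Set.Ioo η₁ η₂ ∧ Nfun η₁ α = ξ * Dfun η₁ α := by
  obtain ⟨α, hα, hξ⟩ : ξ ∈ branchSpeed η₁ '' Ioo η₁ η₂ := by
    refine intermediate_value_Ioo' h2.le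
      ((continuousOn_branchSpeed h1).mono Icc_subset_Ici_self) ⟨?_, ?_⟩
    · rwa [← Nfun_div_Dfun h1 h2]
    · rwa [branchSpeed_self h1]
  have heq_iff : ∀ β ∈ Ioo η₁ η₂, Nfun η₁ β = ξ * Dfun η₁ β ↔ branchSpeed η₁ β = ξ := by
    intro β hβ
    rw [← Nfun_div_Dfun h1 hβ.1, div_eq_iff (Dfun_pos h1 hβ.1).ne']
  refine ⟨α, ⟨hα, (heq_iff α hα).2 hξ⟩, fun β ⟨hβ, hβξ⟩ ↦ ?_⟩
  exact (strictAntiOn_branchSpeed h1).injOn hβ.1.le hα.1.le (((heq_iff β hβ).1 hβξ).trans hξ.symm)
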